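/- Let Ω ⊂ S² be a spherically convex set, Ĩ ⊂ S² the set of v with ⟨u,v⟩ = 0 for some u ∈ Ω (directions of great circles meeting Ω), and Ω* the dual cone component where ⟨u,v⟩ > 0 for all u ∈ Ω. Then α(Ω) := (1/2)∫_{u∈Ω}∫_{v∈Ĩ}|⟨u,v⟩| du dv satisfies α(Ω) = π|Ω| − ⟨c(Ω), c(Ω*)⟩, where |Ω| is the surface area of Ω and c(A) = ∫_A u du denotes the (unweighted) vector centroid of A ⊂ S². -/

import Mathlib

open MeasureTheory Metric

noncomputable section

abbrev E3 := EuclideanSpace ℝ (Fin 3)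

/-- The surface measure on the unit sphere `S² ⊂ ℝ³` (total mass `4π`). -/
def sphereMeasure : Measure (sphere (0 : E3) 1) := (volume : Measure E3).toSphere

/-- The cone spanned by a subset `Ω` of the unit sphere. -/
def sphericalCone (Ω : Set (sphere (0 : E3) 1)) : Set E3 :=
  {x : E3 | ∃ t : ℝ, 0 ≤ t ∧ ∃ u ∈ Ω, x = t • (u : E3)}

/-- The (unweighted) vector centroid `c(A) = ∫_A u du` of `A ⊂ S²`. -/
def sphCentroid (A : Set (sphere (0 : E3) 1)) : E3 :=
  ∫ u in A, (u : E3) ∂sphereMeasure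

lemma aux_line : ∫ x : ℝ, |x| * Real.exp (-x ^ 2) = 1 := by
  have h := integral_comp_abs (f := fun x : ℝ => x * Real.exp (-x ^ 2))
  have h2 := integral_rpow_mul_exp_neg_rpow (p := 2) (q := 1) (by norm_num) (by norm_num)
  norm_num at h2
  simp only [sq_abs] at h
  rw [h, h2]; norm_num

lemma aux_radial : ∫ x in Set.Ioi (0 : ℝ), x ^ 2 * (x * Real.exp (-x ^ 2)) = 1 / 2 := by
  have h2 := integral_rpow_mul_exp_neg_rpow (p := 2) (q := (3 : ℕ)) (by norm_num) (by norm_num)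
  simp only [Real.rpow_natCast, Real.rpow_ofNat] at h2
  have h3 : Real.Gamma ((((3 : ℕ) : ℝ) + 1) / 2) = 1 := by
    norm_num
  rw [h3] at h2
  calc _ = ∫ x in Set.Ioi (0 : ℝ), x ^ 3 * Real.exp (-x ^ 2) := by
        congr 1; ext x; ring
    _ = _ := by rw [h2]; norm_num

lemma aux_gauss (u : sphere (0 : E3) 1) :
    ∫ x : E3, |inner ℝ (u : E3) x| * Real.exp (-‖x‖ ^ 2) = Real.pi := by
  have hu : ‖(u : E3)‖ = 1 := by simp
  have ho : Orthonormal ℝ (({0} : Set (Fin 3)).domRestrict (fun _ => (u : E3))) := by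
    constructor
    · intro i; simp
    · intro i j hij
      exact absurd (Subsingleton.elim i j) hij
  obtain ⟨b, hb⟩ := ho.exists_orthonormalBasis_extension_of_card_eq (by simp)
  have hb0 : b 0 = (u : E3) := hb 0 (by simp)
  have h1 : ∫ x : E3, |inner ℝ (u : E3) x| * Real.exp (-‖x‖ ^ 2)
      = ∫ y : E3, |y 0| * Real.exp (-‖y‖ ^ 2) := by
    rw [← b.measurePreserving_repr.integral_comp b.repr.toHomeomorph.measurableEmbedding
      (fun y : E3 => |y 0| * Real.exp (-‖y‖ ^ 2))]
    congr 1; ext x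
    rw [b.repr_apply_apply, hb0, b.repr.norm_map]
  rw [h1, ← (PiLp.volume_preserving_toLp (Fin 3)).integral_comp
    (MeasurableEquiv.toLp 2 _).measurableEmbedding]
  have h2 : ∀ x : Fin 3 → ℝ, |(WithLp.toLp 2 x : E3) 0| * Real.exp (-‖(WithLp.toLp 2 x : E3)‖ ^ 2)
      = ∏ i : Fin 3, (fun i : Fin 3 => fun t : ℝ =>
          (if i = 0 then |t| else 1) * Real.exp (-t ^ 2)) i (x i) := by
    intro x
    rw [EuclideanSpace.norm_sq_eq]
    simp only [Fin.prod_univ_three, Fin.sum_univ_three, Real.norm_eq_abs, sq_abs]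
    simp [Real.exp_add]
    ring
  rw [integral_congr_ae (Filter.Eventually.of_forall h2)]
  refine (integral_fintype_prod_volume_eq_prod (fun i : Fin 3 => fun t : ℝ =>
    (if i = 0 then |t| else 1) * Real.exp (-t ^ 2))).trans ?_
  have hg := integral_gaussian 1
  norm_num at hg
  simp [Fin.prod_univ_three, aux_line, hg]
  exact Real.mul_self_sqrt Real.pi_pos.le

lemma aux_polar (u : sphere (0 : E3) 1) :
    ∫ v, |inner ℝ (u : E3) (v : E3)| ∂sphereMeasure = 2 * Real.pi := by
  have h : ∫ x : E3, |inner ℝ (u : E3) x| * Real.exp (-‖x‖ ^ 2)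
      = (∫ v, |inner ℝ (u : E3) (v : E3)| ∂sphereMeasure) * (1 / 2) := by
    have hdim : Module.finrank ℝ E3 - 1 = 2 := by simp
    calc _ = ∫ x : ({(0)}ᶜ : Set E3), |inner ℝ (u : E3) x.1| * Real.exp (-‖x.1‖ ^ 2)
            ∂((volume : Measure E3).comap (↑)) := by
          rw [integral_subtype_comap (measurableSet_singleton _).compl
            fun x : E3 ↦ |inner ℝ (u : E3) x| * Real.exp (-‖x‖ ^ 2),
            restrict_compl_singleton]
      _ = ∫ p, |inner ℝ (u : E3) (p.1 : E3)| * ((p.2 : ℝ) * Real.exp (-(p.2 : ℝ) ^ 2))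
            ∂(sphereMeasure.prod (.volumeIoiPow (Module.finrank ℝ E3 - 1))) := by
          unfold sphereMeasure
          rw [← (volume : Measure E3).measurePreserving_homeomorphUnitSphereProd.integral_comp
            (Homeomorph.measurableEmbedding _)]
          congr 1; ext x
          have hx : (0 : ℝ) < ‖x.1‖ := norm_pos_iff.2 x.2
          simp only [homeomorphUnitSphereProd_apply_snd_coe,
            homeomorphUnitSphereProd_apply_fst_coe, inner_smul_right, abs_mul, abs_inv, abs_norm]
          field_simp
      _ = (∫ v, |inner ℝ (u : E3) (v : E3)| ∂sphereMeasure) *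
            ∫ r : Set.Ioi (0 : ℝ), ((r : ℝ) * Real.exp (-(r : ℝ) ^ 2))
              ∂(.volumeIoiPow (Module.finrank ℝ E3 - 1)) := by
          have : SFinite sphereMeasure := by unfold sphereMeasure; infer_instance
          exact integral_prod_mul (fun v : sphere (0 : E3) 1 => |inner ℝ (u : E3) (v : E3)|)
            (fun r : Set.Ioi (0 : ℝ) => (r : ℝ) * Real.exp (-(r : ℝ) ^ 2))
      _ = _ := by
          congr 1
          rw [hdim, ← aux_radial]
          simp only [Measure.volumeIoiPow, ENNReal.ofReal]
          rw [integral_withDensity_eq_integral_smul,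
            integral_subtype_comap measurableSet_Ioi
              fun a : ℝ ↦ Real.toNNReal (a ^ 2) • (a * Real.exp (-a ^ 2)),
            setIntegral_congr_fun measurableSet_Ioi fun x hx ↦ ?_]
          · simp only [NNReal.smul_def, smul_eq_mul]
            rw [Real.coe_toNNReal _ (sq_nonneg _)]
          · exact (measurable_subtype_coe.pow_const _).real_toNNReal
  rw [aux_gauss] at h
  linarith

instance : IsFiniteMeasure sphereMeasure := by unfold sphereMeasure; infer_instance

lemma aux_singleton (u : sphere (0 : E3) 1) : sphereMeasure {u} = 0 := by
  unfold sphereMeasure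
  rw [Measure.toSphere_apply' _ (measurableSet_singleton u)]
  have : (volume : Measure E3) ((Submodule.span ℝ {(u : E3)} : Submodule ℝ E3) : Set E3) = 0 := by
    apply Measure.addHaar_submodule
    intro h
    have h1 := finrank_span_singleton (K := ℝ) (ne_zero_of_mem_unit_sphere u)
    rw [h] at h1
    simp at h1
  rw [measure_mono_null _ this, mul_zero]
  rintro x hx
  obtain ⟨t, -, y, hy, rfl⟩ := Set.mem_smul.1 hx
  simp only [Set.image_singleton, Set.mem_singleton_iff] at hy
  subst hy
  exact Submodule.smul_mem _ _ (Submodule.mem_span_singleton_self _)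

lemma aux_neg : MeasurePreserving (fun v : sphere (0 : E3) 1 => -v) sphereMeasure sphereMeasure := by
  have hm : Measurable (fun v : sphere (0 : E3) 1 => -v) := continuous_neg.measurable
  refine ⟨hm, ?_⟩
  ext s hs
  rw [Measure.map_apply hm hs]
  unfold sphereMeasure
  rw [Measure.toSphere_apply' _ hs, Measure.toSphere_apply' _ (hm hs)]
  congr 1
  rw [← (Measure.measurePreserving_neg (volume : Measure E3)).measure_preimage_emb
    (Homeomorph.neg E3).measurableEmbedding]
  congr 1
  ext x
  simp only [Set.mem_preimage, Set.mem_smul, Set.mem_image]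
  constructor
  · rintro ⟨t, ht, _, ⟨v, hv, rfl⟩, h⟩
    exact ⟨t, ht, _, ⟨-v, hv, rfl⟩, by simp [h]⟩
  · rintro ⟨t, ht, _, ⟨v, hv, rfl⟩, h⟩
    exact ⟨t, ht, _, ⟨-v, by simpa using hv, rfl⟩, by simp [h]⟩

/-- Sign dichotomy: a vector off the great circles meeting `Ω` has constant sign on `Ω`,
unless `Ω` is an antipodal pair. -/
lemma aux_sign (Ω : Set (sphere (0 : E3) 1)) (hconv : Convex ℝ (sphericalCone Ω))
    {v u w : sphere (0 : E3) 1} (hv : ¬ ∃ u ∈ Ω, inner ℝ (u : E3) (v : E3) = 0)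
    (hu : u ∈ Ω) (hw : w ∈ Ω) (hup : 0 < inner ℝ (u : E3) (v : E3))
    (hwn : inner ℝ (w : E3) (v : E3) < 0) : w = -u := by
  set a := inner ℝ (u : E3) (v : E3) with ha
  set b := inner ℝ (w : E3) (v : E3) with hb
  have hab : 0 < a - b := by linarith
  have hmem := hconv (x := (u : E3)) ⟨1, by norm_num, u, hu, by simp⟩
    (y := (w : E3)) ⟨1, by norm_num, w, hw, by simp⟩
    (a := -b / (a - b)) (b := a / (a - b)) (div_nonneg (by linarith) hab.le)
    (div_nonneg hup.le hab.le) (by field_simp; ring)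
  obtain ⟨t, ht, z, hz, hzt⟩ := hmem
  have h0 : t * inner ℝ (z : E3) (v : E3) = 0 := by
    have := congrArg (fun x => inner ℝ x (v : E3)) hzt
    simp only [inner_add_left, real_inner_smul_left] at this
    rw [← this, ← ha, ← hb]; field_simp; ring
  have ht0 : t = 0 := by
    rcases mul_eq_zero.1 h0 with h | h
    · exact h
    · exact absurd ⟨z, hz, h⟩ hv
  rw [ht0, zero_smul] at hzt
  have h1 : a • (w : E3) = b • (u : E3) := by
    have := congrArg (fun x => (a - b) • x) hzt
    simp only [smul_add, smul_smul, smul_zero, mul_div_cancel₀ _ hab.ne'] at this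
    rw [neg_smul] at this
    exact (neg_add_eq_zero.1 this).symm
  have h2 : a = -b := by
    have := congrArg norm h1
    simp only [norm_smul, norm_eq_of_mem_sphere, Real.norm_eq_abs, mul_one] at this
    rw [abs_of_pos hup, abs_of_neg hwn] at this
    exact this
  have h3 : (w : E3) = -(u : E3) := by
    have : a • (w : E3) = a • (-(u : E3)) := by
      rw [h1, smul_neg, ← neg_smul, h2, neg_neg]
    exact smul_right_injective E3 hup.ne' this
  exact Subtype.ext h3

lemma aux_intble {F : Type*} [NormedAddCommGroup F] {f : sphere (0 : E3) 1 → F}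
    (hf : Continuous f) : Integrable f sphereMeasure :=
  hf.integrable_of_hasCompactSupport (HasCompactSupport.of_compactSpace f)

/-- For a spherically convex set `Ω ⊂ S²`, with `Ĩ` the set of directions of great circles
meeting `Ω` and `Ω*` the dual solid cone, one has
`α(Ω) := (1/2)∫_{u∈Ω}∫_{v∈Ĩ}|⟨u,v⟩| du dv = π|Ω| − ⟨c(Ω), c(Ω*)⟩`. -/
theorem alpha_eq_pi_area_sub_inner_centroids
    (Ω : Set (sphere (0 : E3) 1)) (hne : Ω.Nonempty) (hcl : IsClosed Ω)
    (hconv : Convex ℝ (sphericalCone Ω)) :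
    (1 / 2 : ℝ) *
        (∫ u in Ω,
          ∫ v in {v : sphere (0 : E3) 1 | ∃ u ∈ Ω, inner (𝕜 := ℝ) (u : E3) (v : E3) = 0},
            |inner (𝕜 := ℝ) (u : E3) (v : E3)| ∂sphereMeasure ∂sphereMeasure)
      = Real.pi * (sphereMeasure Ω).toReal -
          inner (𝕜 := ℝ) (sphCentroid Ω)
            (sphCentroid {v : sphere (0 : E3) 1 | ∀ u ∈ Ω, 0 < inner (𝕜 := ℝ) (u : E3) (v : E3)}) := by
  by_cases hbad : sphereMeasure Ω = 0
  · have hr : sphereMeasure.restrict Ω = 0 := Measure.restrict_eq_zero.2 hbad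
    simp [sphCentroid, hr, hbad]
  obtain ⟨u₀, hu₀⟩ := hne
  set T : Set (sphere (0 : E3) 1) := {v | ∃ u ∈ Ω, inner (𝕜 := ℝ) (u : E3) (v : E3) = 0} with hT
  set D : Set (sphere (0 : E3) 1) := {v | ∀ u ∈ Ω, 0 < inner (𝕜 := ℝ) (u : E3) (v : E3)} with hD
  have hsign : ∀ v ∉ T, ∀ u ∈ Ω, ∀ w ∈ Ω, 0 < inner ℝ (u : E3) (v : E3) →
      0 < inner ℝ (w : E3) (v : E3) := by
    intro v hv u hu w hw hup
    by_contra hcon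
    have hwn : inner ℝ (w : E3) (v : E3) < 0 :=
      lt_of_le_of_ne (not_lt.1 hcon) fun h => hv ⟨w, hw, h⟩
    have hwu := aux_sign Ω hconv hv hu hw hup hwn
    apply hbad
    refine measure_mono_null (t := {u} ∪ {w}) ?_
      (measure_union_null (aux_singleton u) (aux_singleton w))
    intro z hz
    rcases lt_trichotomy (inner ℝ (z : E3) (v : E3)) 0 with h | h | h
    · right
      rw [Set.mem_singleton_iff, hwu]
      exact aux_sign Ω hconv hv hu hz hup h
    · exact absurd ⟨z, hz, h⟩ hv
    · left
      have := aux_sign Ω hconv hv hz hw h hwn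
      rw [hwu] at this
      exact (neg_injective this).symm
  have hTcl : IsClosed T := by
    have hc : IsCompact {p : sphere (0 : E3) 1 × sphere (0 : E3) 1 |
        p.1 ∈ Ω ∧ inner ℝ (p.1 : E3) (p.2 : E3) = 0} := by
      apply IsClosed.isCompact
      exact (hcl.preimage continuous_fst).inter (isClosed_eq (by fun_prop) continuous_const)
    have := (hc.image continuous_snd).isClosed
    convert this using 1
    ext v
    simp [hT]
  have hTm : MeasurableSet T := hTcl.measurableSet
  have hDeq : D = Tᶜ ∩ {v | 0 < inner ℝ (u₀ : E3) (v : E3)} := by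
    ext v
    constructor
    · intro h
      exact ⟨fun ⟨u, hu, h0⟩ => (h u hu).ne' h0, h u₀ hu₀⟩
    · rintro ⟨h1, h2⟩ w hw
      exact hsign v h1 u₀ hu₀ w hw h2
  have hDm : MeasurableSet D := by
    rw [hDeq]
    exact hTm.compl.inter (isOpen_lt continuous_const (by fun_prop)).measurableSet
  have hcompl : Tᶜ = D ∪ (fun v => -v) ⁻¹' D := by
    ext v
    constructor
    · intro hv
      rcases lt_trichotomy (inner ℝ (u₀ : E3) (v : E3)) 0 with h | h | h
      · right
        intro w hw
        have hv' : -v ∉ T := by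
          rintro ⟨u, hu, h0⟩
          exact hv ⟨u, hu, by simpa using h0⟩
        exact hsign (-v) hv' u₀ hu₀ w hw (by simpa using h)
      · exact absurd ⟨u₀, hu₀, h⟩ hv
      · left
        rw [hDeq]; exact ⟨hv, h⟩
    · rintro (h | h) ⟨u, hu, h0⟩
      · exact (h u hu).ne' h0
      · have := h u hu
        simp [h0] at this
  have hdisj : Disjoint D ((fun v => -v) ⁻¹' D) := by
    rw [Set.disjoint_left]
    intro v h1 h2
    have a1 := h1 u₀ hu₀
    have a2 := h2 u₀ hu₀
    simp only [coe_neg_sphere, inner_neg_right] at a2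
    linarith
  have hnegm : Measurable (fun v : sphere (0 : E3) 1 => -v) := continuous_neg.measurable
  have key : ∀ u ∈ Ω, ∫ v in T, |inner (𝕜 := ℝ) (u : E3) (v : E3)| ∂sphereMeasure
      = 2 * Real.pi - 2 * inner ℝ (sphCentroid D) (u : E3) := by
    intro u hu
    have hint : Integrable (fun v : sphere (0 : E3) 1 => |inner ℝ (u : E3) (v : E3)|)
        sphereMeasure := aux_intble (by fun_prop)
    have h1 := integral_add_compl hTm hint
    rw [aux_polar, hcompl, setIntegral_union hdisj (hnegm hDm) hint.integrableOn
      hint.integrableOn] at h1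
    have h2 : ∫ v in (fun v => -v) ⁻¹' D, |inner ℝ (u : E3) (v : E3)| ∂sphereMeasure
        = ∫ v in D, |inner ℝ (u : E3) (v : E3)| ∂sphereMeasure := by
      rw [← aux_neg.setIntegral_preimage_emb (Homeomorph.neg _).measurableEmbedding]
      simp
    have h3 : ∫ v in D, |inner ℝ (u : E3) (v : E3)| ∂sphereMeasure
        = inner ℝ (sphCentroid D) (u : E3) := by
      rw [real_inner_comm, sphCentroid, ← integral_inner
        (aux_intble continuous_subtype_val).integrableOn]
      exact setIntegral_congr_fun hDm fun v hv => abs_of_pos (hv u hu)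
    rw [h2, h3] at h1
    linarith
  rw [setIntegral_congr_fun hcl.measurableSet key,
    integral_sub (integrable_const _) (aux_intble (by fun_prop)).integrableOn,
    integral_const_mul 2 (fun a : sphere (0 : E3) 1 => inner ℝ (sphCentroid D) (a : E3)),
    integral_inner (aux_intble continuous_subtype_val).integrableOn,
    real_inner_comm (sphCentroid D) (sphCentroid Ω)]
  simp only [integral_const, smul_eq_mul, measureReal_def, Measure.restrict_apply_univ]
  unfold sphCentroid
  ring


end
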